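/- arXiv:1810.01126 — 3 statements merged into one kernel-verified Lean document; each statement's English description precedes it below -/
import Mathlib

section
/- There exists a constant C with 0 < C < 1 such that for every h > 0 and every six times continuously differentiable function u : ℝ → ℝ whose sixth derivative is bounded, the quintic B-spline quasi-interpolant Q₅u on the uniform grid {jh : j ∈ ℤ}, defined by Q₅u(x) = Σ_{k∈ℤ} [ (13/240)(u((k−2)h) + u((k+2)h)) − (7/15)(u((k−1)h) + u((k+1)h)) + (73/40)u(kh) ] · B₅((x − (k−3)h)/h), satisfies sup_{x∈ℝ} |u(x) − Q₅u(x)| ≤ C · h⁶ · sup_{x∈ℝ} |u⁽⁶⁾(x)|. -/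
open MeasureTheory

/-- The cardinal B-spline of degree `d`: `B₀` is the indicator function of `[0,1)` and
`B_{d+1} = B_d * B₀` (convolution), so `B_d` is supported on `[0, d+1]`. -/
noncomputable def cardB : ℕ → ℝ → ℝ
  | 0 => Set.indicator (Set.Ico (0 : ℝ) 1) 1
  | (d + 1) => fun x => ∫ t : ℝ, cardB d (x - t) * cardB 0 t

/-- The quintic B-spline quasi-interpolant of `u` on the uniform grid `{jh : j ∈ ℤ}`. -/
noncomputable def Q5 (h : ℝ) (u : ℝ → ℝ) (x : ℝ) : ℝ :=
  ∑' k : ℤ, ((13 / 240 : ℝ) * (u (((k : ℝ) - 2) * h) + u (((k : ℝ) + 2) * h))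
      - (7 / 15) * (u (((k : ℝ) - 1) * h) + u (((k : ℝ) + 1) * h))
      + (73 / 40) * u ((k : ℝ) * h)) * cardB 5 ((x - ((k : ℝ) - 3) * h) / h)

/-!
After scaling, `Q5 h u x` is a mean with nonnegative B-spline weights of the stencil applied to
`t ↦ u (x + t * h)`. The moments of degree at most `5` of these weights about `x` do not depend on
the position of `x` in its grid cell, and the stencil inverts the resulting averaging operator on
polynomials of degree at most `5`, so such polynomials are reproduced. Only the Taylor remainder,
at most `M h⁶ t⁶ / 720`, contributes to the error. Taking absolute values of the stencil weights and
using that the sixth moment of the B-spline weights is at most `2`, its contribution is at most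
`48 / 720 = 1 / 15` times `M h⁶`.
-/

section Taylor

open scoped Nat

theorem abs_sub_sum_iteratedDeriv_le {n : ℕ} {u : ℝ → ℝ} (hu : ContDiff ℝ (n + 1) u) {M : ℝ}
    (hM : ∀ y, |iteratedDeriv (n + 1) u y| ≤ M) (x y : ℝ) :
    |u y - ∑ k ∈ Finset.range (n + 1), iteratedDeriv k u x / k ! * (y - x) ^ k| ≤
      M / (n + 1)! * |y - x| ^ (n + 1) := by
  rcases eq_or_ne x y with rfl | hxy
  · simp [Finset.sum_range_succ']
  obtain ⟨z, -, hz⟩ := taylor_mean_remainder_lagrange_iteratedDeriv hxy hu.contDiffOn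
  have taylor_eq : taylorWithinEval u n (Set.uIcc x y) x y =
      ∑ k ∈ Finset.range (n + 1), iteratedDeriv k u x / k ! * (y - x) ^ k := by
    rw [taylor_within_apply]
    refine Finset.sum_congr rfl fun k hk ↦ ?_
    have hkn : (k : WithTop ℕ∞) ≤ n + 1 := mod_cast (Finset.mem_range.mp hk).le
    rw [iteratedDerivWithin_eq_iteratedDeriv (uniqueDiffOn_uIcc hxy)
      (hu.of_le hkn).contDiffAt Set.left_mem_uIcc, smul_eq_mul]
    ring
  rw [← taylor_eq, hz, abs_div, abs_mul, abs_pow, Nat.abs_cast, mul_div_right_comm]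
  gcongr
  exact hM z

end Taylor

section ForwardDifferences

open fwdDiff

variable {E : Type*} [NormedAddCommGroup E] {F G : ℝ → E}

theorem intervalIntegrable_fwdDiff_iter (hF : ∀ a b, IntervalIntegrable F volume a b) (h : ℝ)
    (n : ℕ) (a b : ℝ) : IntervalIntegrable ((Δ_[h])^[n] F) volume a b := by
  induction n generalizing a b with
  | zero => exact hF a b
  | succ n ih =>
    rw [Function.iterate_succ_apply']
    exact IntervalIntegrable.sub (by simpa using (ih (a + h) (b + h)).comp_add_right h) (ih a b)

theorem integral_fwdDiff_iter [NormedSpace ℝ E] (hF : ∀ a b, IntervalIntegrable F volume a b)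
    (hG : ∀ a b, ∫ s in a..b, F s = G b - G a) (h : ℝ) (n : ℕ) (a b : ℝ) :
    ∫ s in a..b, (Δ_[h])^[n] F s = (Δ_[h])^[n] G b - (Δ_[h])^[n] G a := by
  induction n generalizing a b with
  | zero => exact hG a b
  | succ n ih =>
    have integrable := intervalIntegrable_fwdDiff_iter hF h n
    simp only [Function.iterate_succ_apply', fwdDiff]
    rw [intervalIntegral.integral_sub
        (by simpa using (integrable (a + h) (b + h)).comp_add_right h) (integrable a b),
      intervalIntegral.integral_comp_add_right ((Δ_[h])^[n] F), ih, ih]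
    abel

end ForwardDifferences

section TruncatedPower

open scoped Nat

/-- The truncated power `x₊ᵈ / d!`, normalised so that `truncPow d` is the right derivative of
`truncPow (d + 1)`. For `d = 0` it is the indicator function of `[0, ∞)`, so it takes the value `1`
at `0`. -/
noncomputable def truncPow (d : ℕ) (x : ℝ) : ℝ :=
  if 0 ≤ x then x ^ d / d ! else 0

variable {d : ℕ} {x : ℝ}

theorem truncPow_of_nonneg (hx : 0 ≤ x) : truncPow d x = x ^ d / d ! := if_pos hx

theorem truncPow_of_neg (hx : x < 0) : truncPow d x = 0 := if_neg hx.not_ge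

theorem monotone_truncPow (d : ℕ) : Monotone (truncPow d) := by
  intro x y hxy
  rcases lt_or_ge x 0 with hx | hx
  · rw [truncPow_of_neg hx, truncPow]
    split_ifs <;> positivity
  · rw [truncPow_of_nonneg hx, truncPow_of_nonneg (hx.trans hxy)]
    gcongr

theorem continuous_truncPow_succ (d : ℕ) : Continuous (truncPow (d + 1)) :=
  Continuous.if_le (by fun_prop) continuous_const continuous_const continuous_id
    fun x hx ↦ by simp [← hx]

theorem hasDerivWithinAt_truncPow_succ (d : ℕ) (x : ℝ) :
    HasDerivWithinAt (truncPow (d + 1)) (truncPow d x) (Set.Ioi x) x := by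
  rcases lt_or_ge x 0 with hx | hx
  · rw [truncPow_of_neg hx]
    refine ((hasDerivAt_const x (0 : ℝ)).congr_of_eventuallyEq ?_).hasDerivWithinAt
    filter_upwards [Iio_mem_nhds hx] with y hy using truncPow_of_neg hy
  · have deriv_pow_div : HasDerivAt (fun y : ℝ ↦ y ^ (d + 1) / (d + 1)!) (x ^ d / d !) x := by
      have factorial_cancel : ((d + 1 : ℕ) : ℝ) * x ^ d / (d + 1)! = x ^ d / d ! := by
        rw [Nat.factorial_succ, Nat.cast_mul, mul_div_mul_left _ _ (by positivity)]
      rw [← factorial_cancel]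
      exact (hasDerivAt_pow (d + 1) x).div_const _
    rw [truncPow_of_nonneg hx]
    exact deriv_pow_div.hasDerivWithinAt.congr
      (fun y hy ↦ truncPow_of_nonneg (hx.trans (le_of_lt hy))) (truncPow_of_nonneg hx)

theorem integral_truncPow (d : ℕ) (a b : ℝ) :
    ∫ s in a..b, truncPow d s = truncPow (d + 1) b - truncPow (d + 1) a :=
  intervalIntegral.integral_eq_sub_of_hasDeriv_right (continuous_truncPow_succ d).continuousOn
    (fun x _ ↦ hasDerivWithinAt_truncPow_succ d x) (monotone_truncPow d).intervalIntegrable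

end TruncatedPower

section CardinalBSpline

open fwdDiff
open scoped Nat

theorem cardB_succ (d : ℕ) (x : ℝ) : cardB (d + 1) x = ∫ s in (x - 1)..x, cardB d s := by
  calc cardB (d + 1) x
      = ∫ t, (Set.Ico (0 : ℝ) 1).indicator (fun t ↦ cardB d (x - t)) t := by
        simp only [cardB, Set.indicator_apply, Pi.one_apply, mul_ite, mul_one, mul_zero]
    _ = ∫ t in (0 : ℝ)..1, cardB d (x - t) := by
        rw [integral_indicator measurableSet_Ico, integral_Ico_eq_integral_Ioc,
          intervalIntegral.integral_of_le zero_le_one]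
    _ = ∫ s in (x - 1)..x, cardB d s := by
        rw [intervalIntegral.integral_comp_sub_left (cardB d), sub_zero]

theorem cardB_nonneg (d : ℕ) (x : ℝ) : 0 ≤ cardB d x := by
  induction d generalizing x with
  | zero =>
    rw [cardB]
    exact Set.indicator_nonneg (fun _ _ ↦ zero_le_one) x
  | succ d ih =>
    rw [cardB_succ]
    exact intervalIntegral.integral_nonneg (by linarith) fun s _ ↦ ih s

theorem cardB_eq_zero_of_notMem {d : ℕ} {x : ℝ} (hx : x ∉ Set.Ico (0 : ℝ) (d + 1)) :
    cardB d x = 0 := by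
  induction d generalizing x with
  | zero =>
    rw [cardB]
    exact Set.indicator_of_notMem (by simpa using hx) 1
  | succ d ih =>
    rw [cardB_succ, intervalIntegral.integral_of_le (by linarith)]
    refine setIntegral_eq_zero_of_forall_eq_zero fun s hs ↦ ih fun hs' ↦ hx ?_
    push_cast
    exact ⟨hs'.1.trans hs.2, by linarith [hs.1, hs'.2]⟩

theorem cardB_eq_fwdDiff_iter_truncPow (d : ℕ) (x : ℝ) :
    cardB d x = (-1) ^ (d + 1) * (Δ_[(-1 : ℝ)])^[d + 1] (truncPow d) x := by
  induction d generalizing x with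
  | zero =>
    have step_difference : cardB 0 x = truncPow 0 x - truncPow 0 (x - 1) := by
      simp only [cardB, Set.indicator_apply, Set.mem_Ico, Pi.one_apply, truncPow, sub_nonneg,
        pow_zero, Nat.factorial_zero, Nat.cast_one, div_one]
      split_ifs <;> grind
    simp [step_difference, fwdDiff, sub_eq_add_neg]
  | succ d ih =>
    have integral_diff := integral_fwdDiff_iter
      (fun _ _ ↦ (monotone_truncPow d).intervalIntegrable) (integral_truncPow d) (-1) (d + 1)
    rw [cardB_succ, intervalIntegral.integral_congr fun s _ ↦ ih s,
      intervalIntegral.integral_const_mul, integral_diff, Function.iterate_succ_apply' _ (d + 1),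
      fwdDiff, ← sub_eq_add_neg]
    ring

theorem cardB_eq_sum_truncPow (d : ℕ) (x : ℝ) :
    cardB d x = ∑ j ∈ Finset.range (d + 2), (-1) ^ j * (d + 1).choose j * truncPow d (x - j) := by
  rw [cardB_eq_fwdDiff_iter_truncPow, fwdDiff_iter_eq_sum_shift, Finset.mul_sum]
  refine Finset.sum_congr rfl fun j hj ↦ ?_
  have sign : (-1 : ℝ) ^ (d + 1) * (-1) ^ (d + 1 - j) = (-1) ^ j := by
    obtain ⟨k, hk⟩ := Nat.exists_eq_add_of_le (Finset.mem_range_succ_iff.mp hj)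
    rw [hk, Nat.add_sub_cancel_left, pow_add, mul_assoc, ← mul_pow]
    simp
  rw [← sign, zsmul_eq_mul, nsmul_eq_mul, mul_neg_one, ← sub_eq_add_neg]
  push_cast
  ring

theorem cardB_add_natCast {d i : ℕ} (hi : i ≤ d) {f : ℝ} (hf : f ∈ Set.Ico (0 : ℝ) 1) :
    cardB d (f + i) =
      ∑ j ∈ Finset.range (i + 1), (-1) ^ j * (d + 1).choose j * ((f + i - j) ^ d / d !) := by
  rw [cardB_eq_sum_truncPow]
  have range_subset : Finset.range (i + 1) ⊆ Finset.range (d + 2) :=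
    Finset.range_subset_range.mpr (by lia)
  rw [← Finset.sum_subset range_subset]
  · refine Finset.sum_congr rfl fun j hj ↦ ?_
    have hji : (j : ℝ) ≤ i := mod_cast Finset.mem_range_succ_iff.mp hj
    rw [truncPow_of_nonneg (by linarith [hf.1])]
  · intro j _ hj
    have hij : (i : ℝ) + 1 ≤ j := mod_cast not_lt.mp (mt Finset.mem_range.mpr hj)
    rw [truncPow_of_neg (by linarith [hf.2]), mul_zero]

theorem tsum_mul_cardB_sub_intCast (d : ℕ) (F : ℤ → ℝ) (y : ℝ) :
    ∑' k : ℤ, F k * cardB d (y - k) =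
      ∑ i ∈ Finset.range (d + 1), F (⌊y⌋ - i) * cardB d (Int.fract y + i) := by
  have injective : Function.Injective fun i : ℕ ↦ ⌊y⌋ - (i : ℤ) := fun i j hij ↦ by simpa using hij
  have vanishing (k : ℤ) (hk : k ∉ (Finset.range (d + 1)).image fun i : ℕ ↦ ⌊y⌋ - (i : ℤ)) :
      F k * cardB d (y - k) = 0 := by
    rw [cardB_eq_zero_of_notMem, mul_zero]
    rintro ⟨hky, hyk⟩
    have k_le : k ≤ ⌊y⌋ := Int.le_floor.mpr (by linarith)
    have floor_lt : ⌊y⌋ < k + (d + 1) := Int.floor_lt.mpr (by push_cast; linarith)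
    exact hk (Finset.mem_image.mpr ⟨(⌊y⌋ - k).toNat, Finset.mem_range.mpr (by lia), by lia⟩)
  rw [tsum_eq_sum vanishing, Finset.sum_image injective.injOn]
  refine Finset.sum_congr rfl fun i _ ↦ ?_
  rw [← Int.self_sub_floor]
  push_cast
  ring_nf

end CardinalBSpline

section Stencil

/-- The difference operator on functions with the symmetric five-point stencil of weights
`a, b, c, b, a` and step `1`. It is used with the weights of `Q5` and with their absolute values. -/
noncomputable def symmetricStencil (a b c : ℝ) : (ℝ → ℝ) →ₗ[ℝ] (ℝ → ℝ) :=
  a • (LinearMap.funLeft ℝ ℝ (· - 2) + LinearMap.funLeft ℝ ℝ (· + 2))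
    + b • (LinearMap.funLeft ℝ ℝ (· - 1) + LinearMap.funLeft ℝ ℝ (· + 1)) + c • LinearMap.id

variable (a b c : ℝ)

theorem symmetricStencil_apply (v : ℝ → ℝ) (t : ℝ) :
    symmetricStencil a b c v t =
      a * (v (t - 2) + v (t + 2)) + b * (v (t - 1) + v (t + 1)) + c * v t := rfl

theorem abs_symmetricStencil_le {v g : ℝ → ℝ} (hvg : ∀ t, |v t| ≤ g t) (t : ℝ) :
    |symmetricStencil a b c v t| ≤ symmetricStencil |a| |b| |c| g t := by
  have abs_add_pair_le (s r : ℝ) : |v s + v r| ≤ g s + g r :=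
    (abs_add_le _ _).trans (add_le_add (hvg s) (hvg r))
  simp only [symmetricStencil_apply]
  refine (abs_add_three _ _ _).trans ?_
  simp only [abs_mul]
  gcongr
  exacts [abs_add_pair_le _ _, abs_add_pair_le _ _, hvg t]

theorem symmetricStencil_pow (n : ℕ) :
    symmetricStencil a b c (fun t ↦ t ^ n) = ∑ j ∈ Finset.range (n + 1),
      (n.choose j * symmetricStencil a b c (fun t ↦ t ^ (n - j)) 0) • fun t : ℝ ↦ t ^ j := by
  ext t
  simp only [symmetricStencil_apply, sub_eq_add_neg, add_pow, Finset.mul_sum,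
    ← Finset.sum_add_distrib, Finset.sum_apply, Pi.smul_apply, smul_eq_mul, zero_add]
  have center : t ^ n = ∑ j ∈ Finset.range (n + 1), t ^ j * 0 ^ (n - j) * n.choose j := by
    rw [← add_pow, add_zero]
  rw [center, Finset.mul_sum, ← Finset.sum_add_distrib]
  exact Finset.sum_congr rfl fun j _ ↦ by ring

theorem symmetricStencil_comp_add_right (v : ℝ → ℝ) (s t : ℝ) :
    symmetricStencil a b c (fun r ↦ v (r + s)) t = symmetricStencil a b c v (t + s) := by
  simp only [symmetricStencil_apply, add_right_comm _ s, sub_add_eq_add_sub]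

/-- The stencil producing the B-spline coefficients of the quasi-interpolant `Q5` from samples of
the function. -/
noncomputable abbrev quinticStencil : (ℝ → ℝ) →ₗ[ℝ] (ℝ → ℝ) :=
  symmetricStencil (13 / 240) (-7 / 15) (73 / 40)

theorem abs_quinticStencil_le {v g : ℝ → ℝ} (hvg : ∀ t, |v t| ≤ g t) (t : ℝ) :
    |quinticStencil v t| ≤ symmetricStencil (13 / 240) (7 / 15) (73 / 40) g t := by
  simpa only [abs_div, abs_neg, Nat.abs_ofNat] using
    abs_symmetricStencil_le (13 / 240) (-7 / 15) (73 / 40) hvg t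

end Stencil

section SplineMean

/-- The weighted mean `v ↦ ∑ₖ v (k - y) B₅ (y - k + 3)` over the integer grid seen from a point `y`
with fractional part `f`, as a finite sum: only the indices `k = ⌊y⌋ + 3 - i` with `0 ≤ i ≤ 5`
contribute. -/
noncomputable def splineMean (f : ℝ) : (ℝ → ℝ) →ₗ[ℝ] ℝ :=
  ∑ i ∈ Finset.range 6, cardB 5 (f + i) • LinearMap.proj (3 - i - f)

theorem splineMean_apply (f : ℝ) (v : ℝ → ℝ) :
    splineMean f v = ∑ i ∈ Finset.range 6, cardB 5 (f + i) * v (3 - i - f) := by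
  simp [splineMean]

theorem splineMean_mono (f : ℝ) : Monotone (splineMean f) := by
  intro v w hvw
  simp only [splineMean_apply]
  exact Finset.sum_le_sum fun i _ ↦ mul_le_mul_of_nonneg_left (hvw _) (cardB_nonneg 5 _)

theorem abs_splineMean_le (f : ℝ) (v : ℝ → ℝ) : |splineMean f v| ≤ splineMean f |v| :=
  abs_le.mpr ⟨by rw [← map_neg]; exact splineMean_mono f fun t ↦ neg_abs_le (v t),
    splineMean_mono f fun t ↦ le_abs_self (v t)⟩

variable {f : ℝ}

-- The last three weights are simplified by the symmetry `B₅ (6 - x) = B₅ x`.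
theorem splineMean_eq_of_mem_Ico (hf : f ∈ Set.Ico (0 : ℝ) 1) (v : ℝ → ℝ) :
    splineMean f v = (f ^ 5 * v (3 - f) + ((f + 1) ^ 5 - 6 * f ^ 5) * v (2 - f)
      + ((f + 2) ^ 5 - 6 * (f + 1) ^ 5 + 15 * f ^ 5) * v (1 - f)
      + ((3 - f) ^ 5 - 6 * (2 - f) ^ 5 + 15 * (1 - f) ^ 5) * v (-f)
      + ((2 - f) ^ 5 - 6 * (1 - f) ^ 5) * v (-1 - f) + (1 - f) ^ 5 * v (-2 - f)) / 120 := by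
  rw [splineMean_apply, Finset.sum_congr rfl fun i hi ↦ by
    rw [cardB_add_natCast (Finset.mem_range_succ_iff.mp hi) hf]]
  norm_num [Finset.sum_range_succ, Nat.choose, Nat.factorial]
  ring

theorem splineMean_one (hf : f ∈ Set.Ico (0 : ℝ) 1) : splineMean f (fun _ ↦ 1) = 1 := by
  rw [splineMean_eq_of_mem_Ico hf]; ring

theorem splineMean_id (hf : f ∈ Set.Ico (0 : ℝ) 1) : splineMean f (fun t ↦ t) = 0 := by
  rw [splineMean_eq_of_mem_Ico hf]; ring

theorem splineMean_pow_two (hf : f ∈ Set.Ico (0 : ℝ) 1) :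
    splineMean f (fun t ↦ t ^ 2) = 1 / 2 := by
  rw [splineMean_eq_of_mem_Ico hf]; ring

theorem splineMean_pow_three (hf : f ∈ Set.Ico (0 : ℝ) 1) : splineMean f (fun t ↦ t ^ 3) = 0 := by
  rw [splineMean_eq_of_mem_Ico hf]; ring

theorem splineMean_pow_four (hf : f ∈ Set.Ico (0 : ℝ) 1) :
    splineMean f (fun t ↦ t ^ 4) = 7 / 10 := by
  rw [splineMean_eq_of_mem_Ico hf]; ring

theorem splineMean_pow_five (hf : f ∈ Set.Ico (0 : ℝ) 1) : splineMean f (fun t ↦ t ^ 5) = 0 := by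
  rw [splineMean_eq_of_mem_Ico hf]; ring

theorem splineMean_pow_six (hf : f ∈ Set.Ico (0 : ℝ) 1) :
    splineMean f (fun t ↦ t ^ 6) = 3 / 2 + f ^ 2 / 2 - f ^ 4 * (5 / 2 - 3 * f + f ^ 2) := by
  rw [splineMean_eq_of_mem_Ico hf]; ring

theorem splineMean_pow_six_le (hf : f ∈ Set.Ico (0 : ℝ) 1) : splineMean f (fun t ↦ t ^ 6) ≤ 2 := by
  have sq_le_one : f ^ 2 ≤ 1 := pow_le_one₀ hf.1 hf.2.le
  have quadratic_nonneg : 0 ≤ 5 / 2 - 3 * f + f ^ 2 := by nlinarith [sq_nonneg (f - 3 / 2)]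
  have correction_nonneg : 0 ≤ f ^ 4 * (5 / 2 - 3 * f + f ^ 2) := by positivity
  rw [splineMean_pow_six hf]
  linarith

theorem splineMean_symmetricStencil_pow (f a b c : ℝ) (n : ℕ) :
    splineMean f (symmetricStencil a b c fun t ↦ t ^ n) = ∑ j ∈ Finset.range (n + 1),
      n.choose j * symmetricStencil a b c (fun t ↦ t ^ (n - j)) 0 * splineMean f fun t ↦ t ^ j := by
  rw [symmetricStencil_pow, map_sum]
  simp only [map_smul, smul_eq_mul]

end SplineMean

section QuasiInterpolant

variable {f : ℝ}

theorem splineMean_quinticStencil_pow (hf : f ∈ Set.Ico (0 : ℝ) 1) {n : ℕ} (hn : n < 6) :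
    splineMean f (quinticStencil fun t ↦ t ^ n) = 0 ^ n := by
  rw [splineMean_symmetricStencil_pow]
  interval_cases n <;>
    norm_num [Finset.sum_range_succ, symmetricStencil_apply, splineMean_one hf,
      splineMean_id hf, splineMean_pow_two hf, splineMean_pow_three hf,
      splineMean_pow_four hf, splineMean_pow_five hf, Nat.choose]

theorem splineMean_quinticStencil_sum_pow (hf : f ∈ Set.Ico (0 : ℝ) 1) (c : ℕ → ℝ) :
    splineMean f (quinticStencil (∑ n ∈ Finset.range 6, c n • fun t ↦ t ^ n)) = c 0 := by
  rw [map_sum, map_sum]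
  calc _ = ∑ n ∈ Finset.range 6, c n * 0 ^ n := Finset.sum_congr rfl fun n hn ↦ by
        rw [map_smul, map_smul, smul_eq_mul,
          splineMean_quinticStencil_pow hf (Finset.mem_range.mp hn)]
    _ = c 0 := by simp [Finset.sum_range_succ]

theorem splineMean_abs_quinticStencil_pow_six_le (hf : f ∈ Set.Ico (0 : ℝ) 1) :
    splineMean f (symmetricStencil (13 / 240) (7 / 15) (73 / 40) fun t ↦ t ^ 6) ≤ 48 := by
  rw [splineMean_symmetricStencil_pow]
  norm_num [Finset.sum_range_succ, symmetricStencil_apply, splineMean_one hf, splineMean_id hf,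
    splineMean_pow_two hf, splineMean_pow_three hf, splineMean_pow_four hf, splineMean_pow_five hf,
    Nat.choose]
  linarith [splineMean_pow_six_le hf]

theorem Q5_eq_splineMean {h : ℝ} (hh : h ≠ 0) (u : ℝ → ℝ) (x : ℝ) :
    Q5 h u x = splineMean (Int.fract (x / h)) (quinticStencil fun t ↦ u (x + t * h)) := by
  have spline_arg (k : ℤ) : (x - ((k : ℝ) - 3) * h) / h = x / h + 3 - k := by
    field_simp
    ring
  have coefficient (k : ℤ) :
      (13 / 240 : ℝ) * (u (((k : ℝ) - 2) * h) + u (((k : ℝ) + 2) * h))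
        - (7 / 15) * (u (((k : ℝ) - 1) * h) + u (((k : ℝ) + 1) * h)) + (73 / 40) * u ((k : ℝ) * h)
      = quinticStencil (fun t ↦ u (t * h)) k := by
    rw [symmetricStencil_apply]
    ring
  have recenter : (fun t ↦ u (x + t * h)) = fun t ↦ u ((t + x / h) * h) := by
    ext t
    rw [add_mul, div_mul_cancel₀ x hh, add_comm]
  simp only [Q5, spline_arg, coefficient]
  rw [tsum_mul_cardB_sub_intCast 5 fun k : ℤ ↦ quinticStencil (fun t ↦ u (t * h)) k,
    splineMean_apply, recenter]
  refine Finset.sum_congr rfl fun i _ ↦ ?_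
  have node : ((⌊x / h⌋ + 3 - i : ℤ) : ℝ) = 3 - i - Int.fract (x / h) + x / h := by
    rw [← Int.self_sub_floor]
    push_cast
    ring
  rw [Int.fract_add_ofNat, Int.floor_add_ofNat, node, mul_comm,
    symmetricStencil_comp_add_right _ _ _ fun t ↦ u (t * h)]

theorem abs_splineMean_quinticStencil_sub_le (hf : f ∈ Set.Ico (0 : ℝ) 1) {g : ℝ → ℝ}
    {c : ℕ → ℝ} {K : ℝ}
    (hg : ∀ t, |g t - ∑ n ∈ Finset.range 6, c n * t ^ n| ≤ K * t ^ 6) :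
    |splineMean f (quinticStencil g) - c 0| ≤ 48 * K := by
  have K_nonneg : 0 ≤ K := (abs_nonneg _).trans (by simpa using hg 1)
  set p : ℝ → ℝ := ∑ n ∈ Finset.range 6, c n • fun t ↦ t ^ n with hp
  have remainder (t : ℝ) : |(g - p) t| ≤ (K • fun t : ℝ ↦ t ^ 6) t := by simpa [hp] using hg t
  calc |splineMean f (quinticStencil g) - c 0|
      = |splineMean f (quinticStencil (g - p))| := by
        rw [map_sub, map_sub, hp, splineMean_quinticStencil_sum_pow hf]
    _ ≤ splineMean f (symmetricStencil (13 / 240) (7 / 15) (73 / 40) (K • fun t ↦ t ^ 6)) :=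
        (abs_splineMean_le f _).trans (splineMean_mono f (abs_quinticStencil_le remainder))
    _ = K * splineMean f (symmetricStencil (13 / 240) (7 / 15) (73 / 40) fun t ↦ t ^ 6) := by
        rw [map_smul, map_smul, smul_eq_mul]
    _ ≤ 48 * K := by
        rw [mul_comm]
        exact mul_le_mul_of_nonneg_right (splineMean_abs_quinticStencil_pow_six_le hf) K_nonneg

theorem abs_sub_Q5_le {h : ℝ} (hh : h ≠ 0) {u : ℝ → ℝ} (hu : ContDiff ℝ 6 u) {M : ℝ}
    (hM : ∀ y, |iteratedDeriv 6 u y| ≤ M) (x : ℝ) : |u x - Q5 h u x| ≤ 1 / 15 * h ^ 6 * M := by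
  have scaled_taylor (t : ℝ) :
      |u (x + t * h) - ∑ n ∈ Finset.range 6, iteratedDeriv n u x / n.factorial * h ^ n * t ^ n| ≤
        M / 720 * h ^ 6 * t ^ 6 := by
    have taylor := abs_sub_sum_iteratedDeriv_le (n := 5) (by exact_mod_cast hu) hM x (x + t * h)
    simp only [add_sub_cancel_left, mul_pow, mul_comm (t ^ _), ← mul_assoc, abs_mul,
      Even.pow_abs (by decide : Even 6)] at taylor
    norm_num [Nat.factorial] at taylor
    exact taylor
  have fract_mem : Int.fract (x / h) ∈ Set.Ico (0 : ℝ) 1 :=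
    ⟨Int.fract_nonneg _, Int.fract_lt_one _⟩
  rw [abs_sub_comm, Q5_eq_splineMean hh]
  convert abs_splineMean_quinticStencil_sub_le fract_mem scaled_taylor using 1
  · simp
  · ring

end QuasiInterpolant

theorem qnbsqi_error_bound :
    ∃ C : ℝ, 0 < C ∧ C < 1 ∧
      ∀ h : ℝ, 0 < h → ∀ u : ℝ → ℝ, ContDiff ℝ 6 u →
        (∃ M : ℝ, ∀ x : ℝ, |iteratedDeriv 6 u x| ≤ M) →
        ∀ x : ℝ, |u x - Q5 h u x| ≤ C * h ^ 6 * ⨆ y : ℝ, |iteratedDeriv 6 u y| := by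
  refine ⟨1 / 15, by norm_num, by norm_num, fun h hh u hu ⟨M, hM⟩ x ↦ ?_⟩
  have bddAbove : BddAbove (Set.range fun y ↦ |iteratedDeriv 6 u y|) :=
    ⟨M, Set.forall_mem_range.mpr hM⟩
  exact abs_sub_Q5_le hh.ne' hu (le_ciSup bddAbove) x
end

section
/- The QnBSQI first-derivative approximation is sixth-order accurate: if u : ℝ → ℝ is seven times continuously differentiable, then for every x ∈ ℝ, the function h ↦ (1/h)·[ −(13/5760)u(x−4h) − (1/320)u(x−3h) + (341/2880)u(x−2h) − (2069/2880)u(x−h) + (2069/2880)u(x+h) − (341/2880)u(x+2h) + (1/320)u(x+3h) + (13/5760)u(x+4h) ] − u'(x) is O(h⁶) as h → 0. -/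
open Filter Topology Asymptotics

/-!
A linear combination `∑ i, w i • u (x + c i * h)` expands, by Taylor's formula at `x`, into the
terms `(h ^ k / k!) • u⁽ᵏ⁾(x)` weighted by the moments `∑ i, w i * c i ^ k`. If all moments of order
below `n` vanish except the one of order `m`, which is `m!`, then dividing by `h ^ m` leaves
`u⁽ᵐ⁾(x)` with an error of order `h ^ (n - m)`. The QnBSQI stencil satisfies these conditions with
`m = 1` and `n = 7`.
-/

section Stencil

lemma isBigO_pow_comp_const_mul {E : Type*} [Norm E] {f : ℝ → E} {n : ℕ}
    (hf : f =O[𝓝 0] fun t : ℝ => t ^ n) (c : ℝ) :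
    (fun h : ℝ => f (c * h)) =O[𝓝 0] fun h : ℝ => h ^ n := by
  have tendsto_scale : Tendsto (fun h : ℝ => c * h) (𝓝 0) (𝓝 0) := by
    simpa using (continuous_const_mul c).tendsto 0
  refine (hf.comp_tendsto tendsto_scale).trans ?_
  simpa only [Function.comp_def, mul_pow] using isBigO_const_mul_self (c ^ n) _ _

variable {E : Type*} [NormedAddCommGroup E] [NormedSpace ℝ E]

lemma isBigO_sub_sum_iteratedDeriv_of_contDiffAt {u : ℝ → E} {x : ℝ} {n : ℕ}
    (hu : ContDiffAt ℝ n u x) :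
    (fun t : ℝ => u (x + t) - ∑ k ∈ Finset.range n, (t ^ k / k.factorial) • iteratedDeriv k u x)
      =O[𝓝 0] fun t : ℝ => t ^ n := by
  obtain ⟨ε, hε, hcontDiffAt⟩ := Metric.eventually_nhds_iff_ball.1 (hu.eventually (by simp))
  have hx_ball : x ∈ Metric.ball x ε := Metric.mem_ball_self hε
  have hu_ball : ContDiffOn ℝ n u (Metric.ball x ε) :=
    fun y hy => (hcontDiffAt y hy).contDiffWithinAt
  have taylor_remainder := (taylor_isLittleO (convex_ball x ε) hx_ball hu_ball).isBigO
  rw [Metric.isOpen_ball.nhdsWithin_eq hx_ball] at taylor_remainder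
  have tendsto_shift : Tendsto (fun t : ℝ => x + t) (𝓝 0) (𝓝 x) := by
    simpa using (continuous_const_add x).tendsto 0
  have top_term : (fun t : ℝ => (t ^ n / n.factorial) • iteratedDeriv n u x)
      =O[𝓝 0] fun t : ℝ => t ^ n := by
    refine .of_bound ‖(n.factorial : ℝ)⁻¹ • iteratedDeriv n u x‖ (.of_forall fun t => ?_)
    rw [div_eq_mul_inv, mul_smul, norm_smul, mul_comm]
  refine ((taylor_remainder.comp_tendsto tendsto_shift).congr_right fun t => ?_).add top_term
    |>.congr_left fun t => ?_
  · simp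
  · have coeff (k : ℕ) : iteratedDerivWithin k u (Metric.ball x ε) x = iteratedDeriv k u x :=
      iteratedDerivWithin_of_isOpen Metric.isOpen_ball hx_ball
    simp only [Function.comp_apply, taylor_within_apply, add_sub_cancel_left, coeff,
      Finset.sum_range_succ, ← div_eq_inv_mul]
    abel

variable {ι : Type*} [Fintype ι]

lemma isBigO_stencil_sub_sum_moments {u : ℝ → E} {x : ℝ} {n : ℕ} (hu : ContDiffAt ℝ n u x)
    (w c : ι → ℝ) :
    (fun h : ℝ => ∑ i, w i • u (x + c i * h) -
        ∑ k ∈ Finset.range n, (h ^ k / k.factorial * ∑ i, w i * c i ^ k) • iteratedDeriv k u x)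
      =O[𝓝 0] fun h : ℝ => h ^ n := by
  have node_remainder (i : ι) := (isBigO_pow_comp_const_mul
    (isBigO_sub_sum_iteratedDeriv_of_contDiffAt hu) (c i)).const_smul_left (w i)
  refine (IsBigO.fun_sum fun i (_ : i ∈ Finset.univ) => node_remainder i).congr_left fun h => ?_
  simp only [Pi.smul_apply, smul_sub, Finset.sum_sub_distrib, Finset.smul_sum, smul_smul,
    Finset.mul_sum, Finset.sum_smul]
  rw [Finset.sum_comm]
  congr! 4
  ring

lemma isBigO_stencil_sub_iteratedDeriv {u : ℝ → E} {x : ℝ} {m n : ℕ} (hu : ContDiffAt ℝ n u x)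
    {w c : ι → ℝ} (hmn : m < n)
    (moments : ∀ k < n, ∑ i, w i * c i ^ k = if k = m then (m.factorial : ℝ) else 0) :
    (fun h : ℝ => (h ^ m)⁻¹ • ∑ i, w i • u (x + c i * h) - iteratedDeriv m u x)
      =O[𝓝[≠] 0] fun h : ℝ => h ^ (n - m) := by
  have taylor_sum (h : ℝ) : ∑ k ∈ Finset.range n,
      (h ^ k / k.factorial * ∑ i, w i * c i ^ k) • iteratedDeriv k u x =
        h ^ m • iteratedDeriv m u x := by
    rw [Finset.sum_eq_single_of_mem m (Finset.mem_range.2 hmn)]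
    · rw [moments m hmn, if_pos rfl, div_mul_cancel₀ _ (by positivity)]
    · intro k hk hkm
      rw [moments k (Finset.mem_range.1 hk), if_neg hkm, mul_zero, zero_smul]
  have expansion := (isBigO_stencil_sub_sum_moments hu w c).mono
    (nhdsWithin_le_nhds (s := {0}ᶜ))
  simp only [taylor_sum] at expansion
  refine ((isBigO_refl (fun h : ℝ => (h ^ m)⁻¹) _).smul expansion).congr' ?_ ?_
  · filter_upwards [self_mem_nhdsWithin] with h hh
    rw [smul_sub, inv_smul_smul₀ (pow_ne_zero m hh)]
  · filter_upwards [self_mem_nhdsWithin] with h hh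
    rw [smul_eq_mul, pow_sub₀ h hh hmn.le, mul_comm]

end Stencil

/-- The offsets, in units of the grid spacing, of the grid points in the quintic BSQI derivative
stencil at an interior node; the node itself has weight zero and is left out. -/
def qnbsqiNode : Fin 8 → ℝ := ![-4, -3, -2, -1, 1, 2, 3, 4]

/-- The weights of the quintic BSQI derivative stencil, in the order of `qnbsqiNode` and before
division by the grid spacing. -/
noncomputable def qnbsqiWeight : Fin 8 → ℝ :=
  ![-(13 / 5760), -(1 / 320), 341 / 2880, -(2069 / 2880),
    2069 / 2880, -(341 / 2880), 1 / 320, 13 / 5760]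

lemma sum_qnbsqiWeight_mul_qnbsqiNode_pow (k : ℕ) (hk : k < 7) :
    ∑ i, qnbsqiWeight i * qnbsqiNode i ^ k = if k = 1 then (Nat.factorial 1 : ℝ) else 0 := by
  simp only [qnbsqiWeight, qnbsqiNode, Fin.sum_univ_eight, Matrix.cons_val]
  interval_cases k <;> norm_num

theorem qnbsqi_derivative_sixth_order_general {E : Type*} [NormedAddCommGroup E] [NormedSpace ℝ E]
    {u : ℝ → E} {x : ℝ} (hu : ContDiffAt ℝ 7 u x) :
    (fun h : ℝ => (1 / h) • (-(13 / 5760 : ℝ) • u (x - 4 * h) - (1 / 320 : ℝ) • u (x - 3 * h)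
        + (341 / 2880 : ℝ) • u (x - 2 * h) - (2069 / 2880 : ℝ) • u (x - h)
        + (2069 / 2880 : ℝ) • u (x + h) - (341 / 2880 : ℝ) • u (x + 2 * h)
        + (1 / 320 : ℝ) • u (x + 3 * h) + (13 / 5760 : ℝ) • u (x + 4 * h)) - deriv u x)
      =O[𝓝[≠] (0 : ℝ)] fun h : ℝ => h ^ 6 := by
  refine (isBigO_stencil_sub_iteratedDeriv hu (by norm_num)
    sum_qnbsqiWeight_mul_qnbsqiNode_pow).congr_left fun h => ?_
  simp [Fin.sum_univ_eight, qnbsqiWeight, qnbsqiNode, sub_eq_add_neg]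

/-- The QnBSQI first-derivative approximation is sixth-order accurate. -/
theorem qnbsqi_derivative_sixth_order (u : ℝ → ℝ) (hu : ContDiff ℝ 7 u) (x : ℝ) :
    (fun h : ℝ => (1 / h) * (-(13 / 5760 : ℝ) * u (x - 4 * h) - (1 / 320) * u (x - 3 * h)
        + (341 / 2880) * u (x - 2 * h) - (2069 / 2880) * u (x - h)
        + (2069 / 2880) * u (x + h) - (341 / 2880) * u (x + 2 * h)
        + (1 / 320) * u (x + 3 * h) + (13 / 5760) * u (x + 4 * h)) - deriv u x)
      =O[𝓝[≠] (0 : ℝ)] fun h : ℝ => h ^ 6 :=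
  qnbsqi_derivative_sixth_order_general hu.contDiffAt
end

section
/- The quadric (degree 4) BSQI first-derivative approximation is fourth-order accurate: if u : ℝ → ℝ is five times continuously differentiable, then for every x ∈ ℝ, the function h ↦ (1/h)·[ −(47/55296)u(x−4h) − (101/9216)u(x−3h) + (3751/27648)u(x−2h) − (20323/27648)u(x−h) + (20323/27648)u(x+h) − (3751/27648)u(x+2h) + (101/9216)u(x+3h) + (47/55296)u(x+4h) ] − u'(x) is O(h⁴) as h → 0. -/
open Filter Topology Asymptotics

/-!
Expand each sample `u (x + c i * h)` by Taylor's formula of degree four, with remainder `O(h ^ 5)`.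
In the weighted sum the coefficient of `h ^ k` is the moment `∑ i, w i * c i ^ k` times
`iteratedDeriv k u x / k!`. For the quadric weights the moments of order `0, …, 4` are
`0, 1, 0, 0, 0`, so only `h * u' x` survives, and dividing by `h` leaves an error `O(h ^ 4)`.
-/

open scoped Nat

section Taylor

variable {E : Type*} [NormedAddCommGroup E] [NormedSpace ℝ E] {f : ℝ → E} {x : ℝ} {n : ℕ}

theorem taylor_isLittleO_of_contDiffAt (hf : ContDiffAt ℝ n f x) :
    (fun y ↦ f y - ∑ k ∈ Finset.range (n + 1), ((k ! : ℝ)⁻¹ * (y - x) ^ k) • iteratedDeriv k f x)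
      =o[𝓝 x] fun y ↦ (y - x) ^ n := by
  obtain ⟨s, hs, hfs⟩ := hf.contDiffOn le_rfl (by simp)
  obtain ⟨ε, hε, hball⟩ := Metric.mem_nhds_iff.mp hs
  have hx : x ∈ Metric.ball x ε := Metric.mem_ball_self hε
  have htaylor := taylor_isLittleO (convex_ball x ε) hx (hfs.mono hball)
  rw [Metric.isOpen_ball.nhdsWithin_eq hx] at htaylor
  simpa only [taylor_within_apply, iteratedDerivWithin_of_isOpen Metric.isOpen_ball hx]
    using htaylor

theorem taylor_isBigO_of_contDiffAt (hf : ContDiffAt ℝ n f x) :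
    (fun t ↦ f (x + t) - ∑ k ∈ Finset.range n, ((k ! : ℝ)⁻¹ * t ^ k) • iteratedDeriv k f x)
      =O[𝓝 0] fun t ↦ t ^ n := by
  have hshift : Tendsto (fun t : ℝ ↦ x + t) (𝓝 0) (𝓝 x) :=
    Continuous.tendsto' (by fun_prop) _ _ (add_zero x)
  have hremainder := ((taylor_isLittleO_of_contDiffAt hf).comp_tendsto hshift).isBigO
  simp only [Function.comp_def, add_sub_cancel_left] at hremainder
  have hlast : (fun t : ℝ ↦ ((n ! : ℝ)⁻¹ * t ^ n) • iteratedDeriv n f x) =O[𝓝 0] fun t ↦ t ^ n :=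
    .of_bound ‖(n ! : ℝ)⁻¹ • iteratedDeriv n f x‖ <| .of_forall fun t ↦ by
      rw [mul_comm, mul_smul, norm_smul, mul_comm]
  refine (hremainder.add hlast).congr_left fun t ↦ ?_
  rw [Finset.sum_range_succ]
  abel

end Taylor

/-- The moment conditions expressing that `(h ^ m)⁻¹ * ∑ i, w i * p (x + c i * h)` is the `m`-th
derivative of `p` at `x` for all polynomials `p` of degree less than `n`. The nodes `c` are measured
from `x` in units of the step `h`. -/
def IsDifferenceRule {ι : Type*} [Fintype ι] (w c : ι → ℝ) (m n : ℕ) : Prop :=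
  ∀ k < n, ∑ i, w i * c i ^ k = if k = m then (m ! : ℝ) else 0

namespace IsDifferenceRule

variable {E ι : Type*} [Fintype ι] {w c : ι → ℝ} {m n : ℕ}

theorem sum_smul_taylor [AddCommGroup E] [Module ℝ E] (hw : IsDifferenceRule w c m n) (hmn : m < n)
    (a : ℕ → E) (h : ℝ) :
    ∑ i, w i • ∑ k ∈ Finset.range n, ((k ! : ℝ)⁻¹ * (c i * h) ^ k) • a k = h ^ m • a m := by
  calc ∑ i, w i • ∑ k ∈ Finset.range n, ((k ! : ℝ)⁻¹ * (c i * h) ^ k) • a k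
      = ∑ k ∈ Finset.range n, ((∑ i, w i * c i ^ k) * ((k ! : ℝ)⁻¹ * h ^ k)) • a k := by
        simp only [Finset.smul_sum, Finset.sum_mul, Finset.sum_smul, smul_smul]
        rw [Finset.sum_comm]
        refine Finset.sum_congr rfl fun k _ ↦ Finset.sum_congr rfl fun i _ ↦ ?_
        congr 1
        ring
    _ = ∑ k ∈ Finset.range n, if k = m then h ^ m • a m else 0 := by
        refine Finset.sum_congr rfl fun k hk ↦ ?_
        rw [hw k (Finset.mem_range.mp hk)]
        split_ifs with hkm
        · rw [hkm, mul_inv_cancel_left₀ (by positivity)]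
        · simp
    _ = h ^ m • a m := by simp [hmn]

variable [NormedAddCommGroup E] [NormedSpace ℝ E] {f : ℝ → E} {x : ℝ}

theorem isBigO_sum_sub (hw : IsDifferenceRule w c m n) (hmn : m < n) (hf : ContDiffAt ℝ n f x) :
    (fun h ↦ ∑ i, w i • f (x + c i * h) - h ^ m • iteratedDeriv m f x) =O[𝓝 0] fun h ↦ h ^ n := by
  have hnode (i : ι) :
      (fun h ↦ f (x + c i * h) -
        ∑ k ∈ Finset.range n, ((k ! : ℝ)⁻¹ * (c i * h) ^ k) • iteratedDeriv k f x)
        =O[𝓝 0] fun h ↦ h ^ n := by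
    have hscale : Tendsto (fun h ↦ c i * h) (𝓝 0) (𝓝 0) :=
      Continuous.tendsto' (by fun_prop) _ _ (mul_zero _)
    refine ((taylor_isBigO_of_contDiffAt hf).comp_tendsto hscale).trans ?_
    simpa only [Function.comp_def, mul_pow] using isBigO_const_mul_self (c i ^ n) (· ^ n) (𝓝 0)
  have hsum := IsBigO.sum fun i (_ : i ∈ Finset.univ) ↦ (hnode i).const_smul_left (w i)
  refine hsum.congr_left fun h ↦ ?_
  simp only [Finset.sum_apply, Pi.smul_apply, smul_sub, Finset.sum_sub_distrib,
    hw.sum_smul_taylor hmn (iteratedDeriv · f x)]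

theorem isBigO_inv_smul_sum_sub (hw : IsDifferenceRule w c m n) (hmn : m < n)
    (hf : ContDiffAt ℝ n f x) :
    (fun h ↦ (h ^ m)⁻¹ • ∑ i, w i • f (x + c i * h) - iteratedDeriv m f x)
      =O[𝓝[≠] 0] fun h ↦ h ^ (n - m) := by
  have hsum := (hw.isBigO_sum_sub hmn hf).mono (nhdsWithin_le_nhds (s := {0}ᶜ))
  have hne : ∀ᶠ h : ℝ in 𝓝[≠] 0, h ≠ 0 := eventually_mem_nhdsWithin
  refine ((isBigO_refl (fun h : ℝ ↦ (h ^ m)⁻¹) (𝓝[≠] 0)).smul hsum).congr' ?_ ?_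
  · filter_upwards [hne] with h hh
    rw [smul_sub, inv_smul_smul₀ (pow_ne_zero m hh)]
  · filter_upwards [hne] with h hh
    rw [smul_eq_mul, pow_sub₀ h hh hmn.le, mul_comm]

end IsDifferenceRule

/-- The grid offsets, in units of the step, of the samples entering the derivative of the quadric
B-spline quasi-interpolant at an interior node. The offset `0`, whose weight vanishes, is left
out. -/
def qdbsqiNode : Fin 8 → ℝ := ![-4, -3, -2, -1, 1, 2, 3, 4]

/-- The coefficients of the derivative of the quadric B-spline quasi-interpolant at an interior
node, listed in the order of `qdbsqiNode`. -/
noncomputable def qdbsqiWeight : Fin 8 → ℝ :=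
  ![-(47 / 55296), -(101 / 9216), 3751 / 27648, -(20323 / 27648),
    20323 / 27648, -(3751 / 27648), 101 / 9216, 47 / 55296]

theorem qdbsqi_isDifferenceRule : IsDifferenceRule qdbsqiWeight qdbsqiNode 1 5 := by
  intro k hk
  simp only [qdbsqiWeight, qdbsqiNode]
  interval_cases k <;> norm_num [Fin.sum_univ_succ]

theorem qdbsqi_derivative_fourth_order_general {E : Type*} [NormedAddCommGroup E] [NormedSpace ℝ E]
    {u : ℝ → E} {x : ℝ} (hu : ContDiffAt ℝ 5 u x) :
    (fun h : ℝ ↦ (1 / h) • (-(47 / 55296 : ℝ) • u (x - 4 * h) - (101 / 9216 : ℝ) • u (x - 3 * h)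
        + (3751 / 27648 : ℝ) • u (x - 2 * h) - (20323 / 27648 : ℝ) • u (x - h)
        + (20323 / 27648 : ℝ) • u (x + h) - (3751 / 27648 : ℝ) • u (x + 2 * h)
        + (101 / 9216 : ℝ) • u (x + 3 * h) + (47 / 55296 : ℝ) • u (x + 4 * h)) - deriv u x)
      =O[𝓝[≠] (0 : ℝ)] fun h : ℝ ↦ h ^ 4 := by
  refine (qdbsqi_isDifferenceRule.isBigO_inv_smul_sum_sub (by norm_num) hu).congr_left fun h ↦ ?_
  simp [qdbsqiWeight, qdbsqiNode, Fin.sum_univ_eight, ← sub_eq_add_neg]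

/-- The quadric (degree 4) BSQI first-derivative approximation is fourth-order
accurate. -/
theorem qdbsqi_derivative_fourth_order (u : ℝ → ℝ) (hu : ContDiff ℝ 5 u) (x : ℝ) :
    (fun h : ℝ => (1 / h) * (-(47 / 55296 : ℝ) * u (x - 4 * h) - (101 / 9216) * u (x - 3 * h)
        + (3751 / 27648) * u (x - 2 * h) - (20323 / 27648) * u (x - h)
        + (20323 / 27648) * u (x + h) - (3751 / 27648) * u (x + 2 * h)
        + (101 / 9216) * u (x + 3 * h) + (47 / 55296) * u (x + 4 * h)) - deriv u x)
      =O[𝓝[≠] (0 : ℝ)] fun h : ℝ => h ^ 4 :=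
  qdbsqi_derivative_fourth_order_general hu.contDiffAt
end
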